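/- Let m ≥ 1. Let v and ω be axially symmetric functions on the closure of D_m, smooth in the interior of D_m, such that: (i) ∂_r² v + (1/r) ∂_r v + ∂_{x₃}² v − v/r² = ∂_{x₃} ω in D_m; (ii) ω is continuous up to the boundary with ω = 0 on ∂D_m; (iii) v, ∂_r v and ∂_{x₃} v extend continuously to the closure of each rectangle S_j away from the corner points, with ∂_{x₃} v = 0 on ∂^H D_m and v = 0 on ∂^V D_m; (iv) the functions g(c) = ∫_{D_m ∩ {r = c}} v(c, x₃) dx₃ and its derivative g′ are continuous in c on [2^{-m}, 1]. Then ∫_{D_m ∩ {r = c}} v(c, x₃) dx₃ = 0 for every c ∈ (2^{-m}, 1). -/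

import Mathlib

noncomputable section

open Real MeasureTheory Set

/-- Inner radius of the `j`-th rectangle: `r_j = 2^(-j)`. -/
def rW (j : ℕ) : ℝ := (2 : ℝ) ^ (-(j : ℝ))

/-- Height of the `j`-th rectangle: `h_j = 2^(-β (j-1))`. -/
def hH (β : ℝ) (j : ℕ) : ℝ := (2 : ℝ) ^ (-β * ((j : ℝ) - 1))

/-- The rectangle `S_j` in the `(r, x₃)` cross-section. -/
def Srect (β : ℝ) (j : ℕ) : Set (ℝ × ℝ) :=
  {p : ℝ × ℝ | rW j ≤ p.1 ∧ p.1 < rW (j - 1) ∧ 0 < p.2 ∧ p.2 < hH β j}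

/-- The `(r, x₃)` cross-section of the domain `D_m`. -/
def Ddom (β : ℝ) (m : ℕ) : Set (ℝ × ℝ) := ⋃ j ∈ Finset.Icc 1 m, Srect β j

/-- The horizontal part `∂^H D_m` of the boundary of `D_m` (where `x₃` is locally constant). -/
def bdH (β : ℝ) (m : ℕ) : Set (ℝ × ℝ) :=
  {p : ℝ × ℝ | p.2 = 0 ∧ rW m ≤ p.1 ∧ p.1 ≤ 1} ∪
    ⋃ j ∈ Finset.Icc 1 m,
      {p : ℝ × ℝ | p.2 = hH β j ∧ rW j ≤ p.1 ∧ p.1 ≤ rW (j - 1)}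

/-- The vertical part `∂^V D_m` of the boundary of `D_m` (where `r` is locally constant). -/
def bdV (β : ℝ) (m : ℕ) : Set (ℝ × ℝ) :=
  {p : ℝ × ℝ | p.1 = 1 ∧ 0 ≤ p.2 ∧ p.2 ≤ 1} ∪
    {p : ℝ × ℝ | p.1 = rW m ∧ 0 ≤ p.2 ∧ p.2 ≤ hH β m} ∪
    ⋃ j ∈ Finset.Icc 1 (m - 1),
      {p : ℝ × ℝ | p.1 = rW j ∧ hH β (j + 1) ≤ p.2 ∧ p.2 ≤ hH β j}

/-- The full boundary `∂ D_m` of `D_m`. -/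
def bdD (β : ℝ) (m : ℕ) : Set (ℝ × ℝ) := bdH β m ∪ bdV β m

/-- The corner points of the polygonal cross-section of `D_m`
(i.e. the corner circles of the 3D domain). -/
def cornerSet (β : ℝ) (m : ℕ) : Set (ℝ × ℝ) :=
  ({(rW m, 0), ((1 : ℝ), 0), ((1 : ℝ), (1 : ℝ)), (rW m, hH β m)} : Set (ℝ × ℝ)) ∪
    ⋃ j ∈ Finset.Icc 1 (m - 1),
      ({(rW j, hH β j), (rW j, hH β (j + 1))} : Set (ℝ × ℝ))

/-- Radial partial derivative `∂_r`. -/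
def pdr (F : ℝ × ℝ → ℝ) (p : ℝ × ℝ) : ℝ := deriv (fun r => F (r, p.2)) p.1

/-- Vertical partial derivative `∂_{x₃}`. -/
def pdz (F : ℝ × ℝ → ℝ) (p : ℝ × ℝ) : ℝ := deriv (fun z => F (p.1, z)) p.2

/-- The axially symmetric Laplacian `Δ = ∂_r² + (1/r) ∂_r + ∂_{x₃}²`. -/
def cylLap (F : ℝ × ℝ → ℝ) (p : ℝ × ℝ) : ℝ :=
  pdr (pdr F) p + (1 / p.1) * pdr F p + pdz (pdz F) p

/-- The integral of an axially symmetric function over the 3-dimensional domain `D_m`,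
computed in the cross-section: `∫_{D_m} f dx = 2π ∬ F r dr dx₃`. -/
def cylIntegral (β : ℝ) (m : ℕ) (F : ℝ × ℝ → ℝ) : ℝ :=
  ∫ p in Ddom β m, F p * (2 * π * p.1)

/-- The vertical cross-section segment `D_m ∩ {r = c}` of the cross-section. -/
def vertSeg (β : ℝ) (m : ℕ) (c : ℝ) : Set ℝ := {z : ℝ | (c, z) ∈ Ddom β m}
open Filter Topology

lemma pdz_hasDerivAt {F : ℝ × ℝ → ℝ} {U : Set (ℝ × ℝ)} (hU : IsOpen U)
    (hF : ContDiffOn ℝ (⊤ : ℕ∞) F U) {x z : ℝ} (hp : (x, z) ∈ U) :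
    HasDerivAt (fun z => F (x, z)) (pdz F (x, z)) z ∧ pdz F (x, z) = fderiv ℝ F (x, z) (0, 1) := by
  have hd : DifferentiableAt ℝ F (x, z) :=
    (hF.contDiffAt (hU.mem_nhds hp)).differentiableAt (by simp)
  have h1 : HasDerivAt (fun z : ℝ => (x, z)) ((0 : ℝ), (1 : ℝ)) z :=
    (hasDerivAt_const z x).prodMk (hasDerivAt_id z)
  have h2 : HasDerivAt (fun z => F (x, z)) (fderiv ℝ F (x, z) (0, 1)) z :=
    HasFDerivAt.comp_hasDerivAt z hd.hasFDerivAt h1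
  have h3 : pdz F (x, z) = fderiv ℝ F (x, z) (0, 1) := h2.deriv
  exact ⟨h3 ▸ h2, h3⟩

lemma pdr_hasDerivAt {F : ℝ × ℝ → ℝ} {U : Set (ℝ × ℝ)} (hU : IsOpen U)
    (hF : ContDiffOn ℝ (⊤ : ℕ∞) F U) {x z : ℝ} (hp : (x, z) ∈ U) :
    HasDerivAt (fun x => F (x, z)) (pdr F (x, z)) x ∧ pdr F (x, z) = fderiv ℝ F (x, z) (1, 0) := by
  have hd : DifferentiableAt ℝ F (x, z) :=
    (hF.contDiffAt (hU.mem_nhds hp)).differentiableAt (by simp)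
  have h1 : HasDerivAt (fun x : ℝ => (x, z)) ((1 : ℝ), (0 : ℝ)) x :=
    (hasDerivAt_id x).prodMk (hasDerivAt_const x z)
  have h2 : HasDerivAt (fun x => F (x, z)) (fderiv ℝ F (x, z) (1, 0)) x :=
    HasFDerivAt.comp_hasDerivAt x hd.hasFDerivAt h1
  have h3 : pdr F (x, z) = fderiv ℝ F (x, z) (1, 0) := h2.deriv
  exact ⟨h3 ▸ h2, h3⟩

lemma pdz_smooth {F : ℝ × ℝ → ℝ} {U : Set (ℝ × ℝ)} (hU : IsOpen U)
    (hF : ContDiffOn ℝ (⊤ : ℕ∞) F U) : ContDiffOn ℝ (⊤ : ℕ∞) (pdz F) U := by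
  have h := hF.fderiv_of_isOpen hU (m := ((⊤ : ℕ∞) : WithTop ℕ∞)) (by simp)
  have h' : ContDiffOn ℝ (⊤ : ℕ∞) (fun p => fderiv ℝ F p (0, 1)) U := h.clm_apply contDiffOn_const
  exact h'.congr fun p hp => (pdz_hasDerivAt hU hF (x := p.1) (z := p.2) hp).2

lemma pdr_smooth {F : ℝ × ℝ → ℝ} {U : Set (ℝ × ℝ)} (hU : IsOpen U)
    (hF : ContDiffOn ℝ (⊤ : ℕ∞) F U) : ContDiffOn ℝ (⊤ : ℕ∞) (pdr F) U := by
  have h := hF.fderiv_of_isOpen hU (m := ((⊤ : ℕ∞) : WithTop ℕ∞)) (by simp)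
  have h' : ContDiffOn ℝ (⊤ : ℕ∞) (fun p => fderiv ℝ F p (1, 0)) U := h.clm_apply contDiffOn_const
  exact h'.congr fun p hp => (pdr_hasDerivAt hU hF (x := p.1) (z := p.2) hp).2

lemma swap_of_cont {F : ℝ × ℝ → ℝ} {U : Set (ℝ × ℝ)} (hF : ContinuousOn F U) {a b c d : ℝ}
    (h : uIcc a b ×ˢ uIcc c d ⊆ U) :
    ∫ x in a..b, ∫ y in c..d, F (x, y) = ∫ y in c..d, ∫ x in a..b, F (x, y) := by
  apply intervalIntegral_intervalIntegral_swap (F := fun x y => F (x, y))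
  have : IntegrableOn F (uIcc a b ×ˢ uIcc c d) :=
    (hF.mono h).integrableOn_compact (isCompact_uIcc.prod isCompact_uIcc)
  exact this.mono_set (prod_mono uIoc_subset_uIcc uIoc_subset_uIcc)

/-- the main estimate -/
lemma core_est {p q h : ℝ} (hp : 0 < p) (v ω : ℝ × ℝ → ℝ)
    (hv : ContDiffOn ℝ (⊤ : ℕ∞) v (Ioo p q ×ˢ Ioo 0 h))
    (hω : ContDiffOn ℝ (⊤ : ℕ∞) ω (Ioo p q ×ˢ Ioo 0 h))
    (heq : ∀ x ∈ Ioo p q ×ˢ Ioo 0 h,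
      pdr (pdr v) x + (1 / x.1) * pdr v x + pdz (pdz v) x - v x / x.1 ^ 2 = pdz ω x)
    {c₀ c a b δ : ℝ} (hc₀ : c₀ ∈ Ioo p q) (hc : c ∈ Ioo p q) (ha : a ∈ Ioo 0 h) (hb : b ∈ Ioo 0 h)
    (hδ : ∀ t ∈ uIcc c₀ c, |(ω (t, b) - pdz v (t, b)) - (ω (t, a) - pdz v (t, a))| ≤ δ) :
    |c * (∫ z in a..b, v (c, z)) - c₀ * (∫ z in a..b, v (c₀, z))
      - (∫ z in a..b, (pdr v (c₀, z) + v (c₀, z) / c₀)) * ((c ^ 2 - c₀ ^ 2) / 2)|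
      ≤ q * (δ * |c - c₀|) * |c - c₀| := by
  set U := Ioo p q ×ˢ Ioo 0 h with hUdef
  have hU : IsOpen U := isOpen_Ioo.prod isOpen_Ioo
  have hvz := pdz_smooth hU hv
  have hvzz := pdz_smooth hU hvz
  have hωz := pdz_smooth hU hω
  have hvr := pdr_smooth hU hv
  have hvrr := pdr_smooth hU hvr
  have sub1 : uIcc c₀ c ⊆ Ioo p q := ordConnected_Ioo.uIcc_subset hc₀ hc
  have sub2 : uIcc a b ⊆ Ioo 0 h := ordConnected_Ioo.uIcc_subset ha hb
  have cx : ∀ {F : ℝ × ℝ → ℝ}, ContinuousOn F U → ∀ z ∈ Ioo 0 h,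
      ContinuousOn (fun x => F (x, z)) (Ioo p q) := fun hF z hz =>
    hF.comp (by fun_prop) fun x hx => ⟨hx, hz⟩
  have cz : ∀ {F : ℝ × ℝ → ℝ}, ContinuousOn F U → ∀ x ∈ Ioo p q,
      ContinuousOn (fun z => F (x, z)) (Ioo 0 h) := fun hF z hz =>
    hF.comp (by fun_prop) fun x hx => ⟨hz, hx⟩
  set L : ℝ × ℝ → ℝ := fun x => pdz ω x - pdz (pdz v) x with hL
  set H : ℝ × ℝ → ℝ := fun x => pdr v x + v x / x.1 with hH
  have cL : ContinuousOn L U := hωz.continuousOn.sub hvzz.continuousOn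
  have ne0 : ∀ x ∈ U, x.1 ≠ 0 := fun x hx => (hp.trans hx.1.1).ne'
  have cH : ContinuousOn H U :=
    hvr.continuousOn.add (hv.continuousOn.div continuousOn_fst ne0)
  -- step 1
  have s1 : ∀ z ∈ Ioo 0 h, ∀ s ∈ uIcc c₀ c, ∫ t in c₀..s, L (t, z) = H (s, z) - H (c₀, z) := by
    intro z hz s hs
    have sub : uIcc c₀ s ⊆ Ioo p q := ordConnected_Ioo.uIcc_subset hc₀ (sub1 hs)
    apply intervalIntegral.integral_eq_sub_of_hasDerivAt (f := fun t => H (t, z))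
    · intro t ht
      have hm : (t, z) ∈ U := ⟨sub ht, hz⟩
      have d1 := (pdr_hasDerivAt hU hvr hm).1
      have d2 := (pdr_hasDerivAt hU hv hm).1
      have ht0 : t ≠ 0 := ne0 _ hm
      have d3 := d1.add (d2.div (hasDerivAt_id t) ht0)
      refine d3.congr_deriv ?_
      have := heq _ hm
      simp only [hL, id] at this ⊢
      rw [← this]
      field_simp
      ring
    · exact ((cx cL z hz).mono sub).intervalIntegrable
  -- step 2
  have s2 : ∀ z ∈ Ioo 0 h, ∫ s in c₀..c, s * (H (s, z) - H (c₀, z)) =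
      c * v (c, z) - c₀ * v (c₀, z) - H (c₀, z) * ((c ^ 2 - c₀ ^ 2) / 2) := by
    intro z hz
    have := intervalIntegral.integral_eq_sub_of_hasDerivAt
      (f := fun s => s * v (s, z) - H (c₀, z) * (s ^ 2 / 2))
      (f' := fun s => s * (H (s, z) - H (c₀, z))) (a := c₀) (b := c) ?_ ?_
    · rw [this]; ring
    · intro t ht
      have hm : (t, z) ∈ U := ⟨sub1 ht, hz⟩
      have ht0 : t ≠ 0 := ne0 _ hm
      have d2 := (pdr_hasDerivAt hU hv hm).1
      have d3 := ((hasDerivAt_id t).mul d2).sub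
        ((((hasDerivAt_id t).pow 2).div_const 2).const_mul (H (c₀, z)))
      refine d3.congr_deriv ?_
      simp only [hH, id]
      field_simp
      push_cast
      ring
    · apply ContinuousOn.intervalIntegrable
      exact continuousOn_id.mul (((cx cH z hz).mono sub1).sub continuousOn_const)
  -- step 3
  have s3 : ∀ t ∈ Ioo p q, ∫ z in a..b, L (t, z) =
      (ω (t, b) - pdz v (t, b)) - (ω (t, a) - pdz v (t, a)) := by
    intro t ht
    apply intervalIntegral.integral_eq_sub_of_hasDerivAt (f := fun z => ω (t, z) - pdz v (t, z))
    · intro z hz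
      have hm : (t, z) ∈ U := ⟨ht, sub2 hz⟩
      exact ((pdz_hasDerivAt hU hω hm).1).sub (pdz_hasDerivAt hU hvz hm).1
    · exact ((cz cL t ht).mono sub2).intervalIntegrable
  -- step 4
  have s4 : ∀ s ∈ uIcc c₀ c, |∫ z in a..b, (H (s, z) - H (c₀, z))| ≤ δ * |c - c₀| := by
    intro s hs
    have sub : uIcc c₀ s ⊆ uIcc c₀ c := uIcc_subset_uIcc_left hs
    have e : ∫ z in a..b, (H (s, z) - H (c₀, z)) = ∫ z in a..b, ∫ t in c₀..s, L (t, z) :=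
      intervalIntegral.integral_congr fun z hz => (s1 z (sub2 hz) s hs).symm
    rw [e, ← swap_of_cont cL (prod_mono (sub.trans sub1) sub2)]
    have hδ0 : 0 ≤ δ := (abs_nonneg _).trans (hδ c₀ left_mem_uIcc)
    calc _ ≤ δ * |s - c₀| := by
          refine (Real.norm_eq_abs _).symm.le.trans (intervalIntegral.norm_integral_le_of_norm_le_const ?_)
          intro t ht
          have ht' := sub (uIoc_subset_uIcc ht)
          rw [s3 t (sub1 ht')]
          exact hδ t ht'
      _ ≤ _ := mul_le_mul_of_nonneg_left (abs_sub_left_of_mem_uIcc hs) hδ0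
  have hi : ∀ {F : ℝ × ℝ → ℝ}, ContinuousOn F U → ∀ x ∈ Ioo p q,
      IntervalIntegrable (fun z => F (x, z)) volume a b := fun hF x hx =>
    ((cz hF x hx).mono sub2).intervalIntegrable
  have e1 : c * (∫ z in a..b, v (c, z)) - c₀ * (∫ z in a..b, v (c₀, z))
      - (∫ z in a..b, H (c₀, z)) * ((c ^ 2 - c₀ ^ 2) / 2) =
      ∫ z in a..b, (c * v (c, z) - c₀ * v (c₀, z) - H (c₀, z) * ((c ^ 2 - c₀ ^ 2) / 2)) := by
    rw [intervalIntegral.integral_sub, intervalIntegral.integral_sub,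
      intervalIntegral.integral_const_mul, intervalIntegral.integral_const_mul,
      intervalIntegral.integral_mul_const]
    · exact (hi hv.continuousOn c hc).const_mul _
    · exact (hi hv.continuousOn c₀ hc₀).const_mul _
    · exact ((hi hv.continuousOn c hc).const_mul _).sub ((hi hv.continuousOn c₀ hc₀).const_mul _)
    · exact (hi cH c₀ hc₀).mul_const _
  have e2 : ∫ z in a..b, (c * v (c, z) - c₀ * v (c₀, z) - H (c₀, z) * ((c ^ 2 - c₀ ^ 2) / 2)) =
      ∫ s in c₀..c, ∫ z in a..b, s * (H (s, z) - H (c₀, z)) := by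
    rw [swap_of_cont (F := fun x => x.1 * (H x - H (c₀, x.2))) (U := U) _ (prod_mono sub1 sub2)]
    · exact intervalIntegral.integral_congr fun z hz => (s2 z (sub2 hz)).symm
    · refine continuousOn_fst.mul (cH.sub ?_)
      exact (cz cH c₀ hc₀).comp continuousOn_snd fun x hx => hx.2
  have := e1.trans e2
  show |c * (∫ z in a..b, v (c, z)) - c₀ * (∫ z in a..b, v (c₀, z))
      - (∫ z in a..b, H (c₀, z)) * ((c ^ 2 - c₀ ^ 2) / 2)| ≤ _
  rw [this]
  refine (Real.norm_eq_abs _).symm.le.trans (intervalIntegral.norm_integral_le_of_norm_le_const ?_)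
  intro s hs
  have hs' := uIoc_subset_uIcc hs
  rw [intervalIntegral.integral_const_mul, norm_mul]
  have hsp := sub1 hs'
  refine mul_le_mul ?_ (s4 s hs') (norm_nonneg _) (hp.trans (hsp.1.trans hsp.2)).le
  rw [Real.norm_eq_abs, abs_of_pos (hp.trans hsp.1)]
  exact hsp.2.le

lemma tendsto_trunc {f : ℝ → ℝ} {h : ℝ} (hh : 0 < h) (hf : ContinuousOn f (Icc 0 h)) :
    Tendsto (fun ε => ∫ z in ε..(h - ε), f z) (𝓝[>] 0) (𝓝 (∫ z in (0:ℝ)..h, f z)) := by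
  have hI : IntegrableOn f (uIcc 0 h) := by
    rw [uIcc_of_le hh.le]; exact hf.integrableOn_Icc
  have hII : ∀ x ∈ Icc 0 h, IntervalIntegrable f volume 0 x := fun x hx =>
    (hf.mono (by rw [uIcc_of_le hx.1]; exact Icc_subset_Icc_right hx.2)).intervalIntegrable
  have hP := intervalIntegral.continuousOn_primitive_interval hI
  rw [uIcc_of_le hh.le] at hP
  have ev : ∀ᶠ ε in 𝓝[>] (0:ℝ), ε ∈ Ioo 0 h := Ioo_mem_nhdsGT hh
  have t1 : Tendsto (fun ε : ℝ => ε) (𝓝[>] 0) (𝓝[Icc 0 h] 0) :=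
    tendsto_nhdsWithin_iff.2 ⟨nhdsWithin_le_nhds, ev.mono fun ε he => ⟨he.1.le, he.2.le⟩⟩
  have t2 : Tendsto (fun ε : ℝ => h - ε) (𝓝[>] 0) (𝓝[Icc 0 h] h) := by
    refine tendsto_nhdsWithin_iff.2 ⟨?_, ev.mono fun ε he =>
      ⟨by linarith [he.2], by linarith [he.1]⟩⟩
    have : Tendsto (fun ε : ℝ => h - ε) (𝓝 0) (𝓝 (h - 0)) := by
      apply Continuous.tendsto; fun_prop
    rw [sub_zero] at this
    exact this.mono_left nhdsWithin_le_nhds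
  have l1 := (hP 0 ⟨le_rfl, hh.le⟩).tendsto.comp t1
  have l2 := (hP h ⟨hh.le, le_rfl⟩).tendsto.comp t2
  have l3 := l2.sub l1
  simp only [intervalIntegral.integral_same, sub_zero] at l3
  refine l3.congr' ?_
  filter_upwards [ev] with ε he
  simp only [Function.comp]
  exact intervalIntegral.integral_interval_sub_left (hII _ ⟨by linarith [he.2], by linarith [he.1]⟩)
    (hII _ ⟨he.1.le, he.2.le⟩)

lemma strip {p q h : ℝ} (hp : 0 < p) (hpq : p < q) (hh : 0 < h) (v ω : ℝ × ℝ → ℝ)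
    (hv : ContDiffOn ℝ (⊤ : ℕ∞) v (Ioo p q ×ˢ Ioo 0 h))
    (hω : ContDiffOn ℝ (⊤ : ℕ∞) ω (Ioo p q ×ˢ Ioo 0 h))
    (heq : ∀ x ∈ Ioo p q ×ˢ Ioo 0 h,
      pdr (pdr v) x + (1 / x.1) * pdr v x + pdz (pdz v) x - v x / x.1 ^ 2 = pdz ω x)
    (cv : ContinuousOn v (Ioo p q ×ˢ Icc 0 h))
    (cψ : ContinuousOn (fun x => ω x - pdz v x) (Ioo p q ×ˢ Icc 0 h))
    (z0 : ∀ t ∈ Ioo p q, ω (t, 0) - pdz v (t, 0) = 0)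
    (zh : ∀ t ∈ Ioo p q, ω (t, h) - pdz v (t, h) = 0) :
    ∃ A B : ℝ, ∀ c ∈ Ioo p q, ∫ z in (0:ℝ)..h, v (c, z) = A * c + B / c := by
  set G : ℝ → ℝ := fun c => ∫ z in (0:ℝ)..h, v (c, z) with hG
  have hq : 0 < q := hp.trans hpq
  have tG : ∀ c ∈ Ioo p q, Tendsto (fun ε => ∫ z in ε..(h - ε), v (c, z)) (𝓝[>] 0) (𝓝 (G c)) := by
    intro c hc
    exact tendsto_trunc hh (cv.comp (by fun_prop) fun z hz => ⟨hc, hz⟩)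
  obtain ⟨c₀, hc₀⟩ := nonempty_Ioo.2 hpq
  set K : ℝ → ℝ := fun ε => ∫ z in ε..(h - ε), (pdr v (c₀, z) + v (c₀, z) / c₀) with hK
  have tR : ∀ c ∈ Ioo p q, Tendsto (fun ε => c * (∫ z in ε..(h - ε), v (c, z))
      - c₀ * (∫ z in ε..(h - ε), v (c₀, z)) - K ε * ((c ^ 2 - c₀ ^ 2) / 2)) (𝓝[>] 0) (𝓝 0) := by
    intro c hc
    have sub1 : uIcc c₀ c ⊆ Ioo p q := ordConnected_Ioo.uIcc_subset hc₀ hc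
    have huc := (isCompact_uIcc.prod isCompact_Icc).uniformContinuousOn_of_continuous
      (cψ.mono (prod_mono sub1 (Subset.refl (Icc 0 h))))
    rw [Metric.uniformContinuousOn_iff] at huc
    rw [Metric.tendsto_nhds]
    intro η hη
    set M := q * |c - c₀| * |c - c₀| with hM
    have hM0 : 0 ≤ M := by positivity
    set δ := η / (M + 1) with hδ
    have hδ0 : 0 < δ := by positivity
    obtain ⟨ρ, hρ, H⟩ := huc (δ / 2) (by positivity)
    have e1 : ∀ᶠ ε in 𝓝[>] (0:ℝ), ε ∈ Ioo 0 h := Ioo_mem_nhdsGT hh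
    have e2 : ∀ᶠ ε in 𝓝[>] (0:ℝ), ε ∈ Ioo 0 ρ := Ioo_mem_nhdsGT hρ
    filter_upwards [e1, e2] with ε h1 h2
    have h1' : h - ε ∈ Ioo 0 h := ⟨by linarith [h1.2], by linarith [h1.1]⟩
    have := core_est hp v ω hv hω heq hc₀ hc h1 h1' (δ := δ) ?_
    · rw [Real.dist_eq, sub_zero]
      refine this.trans_lt ?_
      have : q * (δ * |c - c₀|) * |c - c₀| = η * (M / (M + 1)) := by
        rw [hδ, hM]; ring
      rw [this]
      have : M / (M + 1) < 1 := by rw [div_lt_one (by linarith)]; linarith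
      nlinarith
    · intro t ht
      have b1 := H (t, ε) ⟨ht, h1.1.le, h1.2.le⟩ (t, 0) ⟨ht, le_rfl, hh.le⟩ (by
        rw [Prod.dist_eq]; simp [abs_of_pos h1.1, h2.2, hρ])
      have b2 := H (t, h - ε) ⟨ht, h1'.1.le, h1'.2.le⟩ (t, h) ⟨ht, hh.le, le_rfl⟩ (by
        rw [Prod.dist_eq]; simp [abs_of_pos h1.1, h2.2, hρ])
      simp only [z0 t (sub1 ht), zh t (sub1 ht), Real.dist_eq, sub_zero] at b1 b2
      calc _ ≤ _ := abs_sub _ _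
        _ ≤ δ := by linarith
  have tK : ∀ c ∈ Ioo p q, Tendsto (fun ε => K ε * ((c ^ 2 - c₀ ^ 2) / 2)) (𝓝[>] 0)
      (𝓝 (c * G c - c₀ * G c₀)) := by
    intro c hc
    have := (((tG c hc).const_mul c).sub ((tG c₀ hc₀).const_mul c₀)).sub (tR c hc)
    rw [sub_zero] at this
    exact this.congr fun ε => by ring
  obtain ⟨c₁, hc₁⟩ := nonempty_Ioo.2 hc₀.2
  have hc₁' : c₁ ∈ Ioo p q := ⟨hc₀.1.trans hc₁.1, hc₁.2⟩
  have hc00 : 0 < c₀ := hp.trans hc₀.1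
  have hd : (c₁ ^ 2 - c₀ ^ 2) / 2 ≠ 0 := by
    have := hc₁.1
    have : 0 < (c₁ ^ 2 - c₀ ^ 2) / 2 := by nlinarith
    exact this.ne'
  have tA := (tK c₁ hc₁').div_const ((c₁ ^ 2 - c₀ ^ 2) / 2)
  simp only [mul_div_cancel_right₀ _ hd] at tA
  set A := (c₁ * G c₁ - c₀ * G c₀) / ((c₁ ^ 2 - c₀ ^ 2) / 2)
  refine ⟨A / 2, c₀ * G c₀ - A * c₀ ^ 2 / 2, fun c hc => ?_⟩
  have := tendsto_nhds_unique (tK c hc) (tA.mul_const _)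
  have hc0 : 0 < c := hp.trans hc.1
  change G c = _
  field_simp
  linarith

lemma val_of_lim {f k : ℝ → ℝ} {x : ℝ} {s t : Set ℝ} (hs : ContinuousWithinAt f t x) (hst : s ⊆ t)
    [NeBot (𝓝[s] x)] (hk : ContinuousAt k x) (h : ∀ y ∈ s, f y = k y) : f x = k x := by
  have h1 : Tendsto f (𝓝[s] x) (𝓝 (f x)) := (hs.mono hst).tendsto
  have h2 : Tendsto k (𝓝[s] x) (𝓝 (k x)) := hk.tendsto.mono_left nhdsWithin_le_nhds
  have h3 : f =ᶠ[𝓝[s] x] k := eventually_nhdsWithin_of_forall h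
  exact tendsto_nhds_unique h1 (h2.congr' h3.symm)

lemma neBot_left {a b : ℝ} (h : a < b) : NeBot (𝓝[Ioo a b] a) :=
  mem_closure_iff_nhdsWithin_neBot.1 (by rw [closure_Ioo h.ne]; exact ⟨le_rfl, h.le⟩)

lemma neBot_right {a b : ℝ} (h : a < b) : NeBot (𝓝[Ioo a b] b) :=
  mem_closure_iff_nhdsWithin_neBot.1 (by rw [closure_Ioo h.ne]; exact ⟨h.le, le_rfl⟩)

lemma contAt_sol (A B : ℝ) {x : ℝ} (hx : 0 < x) : ContinuousAt (fun c => A * c + B / c) x := by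
  have := hx.ne'
  fun_prop (disch := assumption)

lemma deriv_sol {g : ℝ → ℝ} {A B p q : ℝ} (hp : 0 < p)
    (h : ∀ y ∈ Ioo p q, g y = A * y + B / y) : ∀ y ∈ Ioo p q, deriv g y = A - B / y ^ 2 := by
  intro y hy
  have hy0 : y ≠ 0 := (hp.trans hy.1).ne'
  have e : g =ᶠ[𝓝 y] fun y => A * y + B / y := by
    filter_upwards [isOpen_Ioo.mem_nhds hy] with z hz using h z hz
  rw [e.deriv_eq]
  have d := ((hasDerivAt_id y).const_mul A).add ((hasDerivAt_const y B).div (hasDerivAt_id y) hy0)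
  refine (d.congr_deriv ?_).deriv
  simp; ring

lemma glue {g : ℝ → ℝ} {A B A' B' p x q a b : ℝ} (hp : 0 < p) (hpx : p < x) (hxq : x < q)
    (hap : a ≤ p) (hqb : q ≤ b)
    (hg : ContinuousOn g (Icc a b)) (hg' : ContinuousOn (deriv g) (Icc a b))
    (h1 : ∀ y ∈ Ioo p x, g y = A * y + B / y) (h2 : ∀ y ∈ Ioo x q, g y = A' * y + B' / y) :
    A = A' ∧ B = B' := by
  have hx : 0 < x := hp.trans hpx
  have hxm : x ∈ Icc a b := ⟨by linarith, by linarith⟩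
  have s1 : Ioo p x ⊆ Icc a b := fun y hy => ⟨by linarith [hy.1], by linarith [hy.2]⟩
  have s2 : Ioo x q ⊆ Icc a b := fun y hy => ⟨by linarith [hy.1], by linarith [hy.2]⟩
  haveI := neBot_right hpx
  haveI := neBot_left hxq
  have cd : ∀ A B : ℝ, ContinuousAt (fun c => A - B / c ^ 2) x := by
    intro A B
    have : x ^ 2 ≠ 0 := by positivity
    fun_prop (disch := assumption)
  have e1 := val_of_lim (hg x hxm) s1 (contAt_sol A B hx) h1
  have e2 := val_of_lim (hg x hxm) s2 (contAt_sol A' B' hx) h2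
  have e3 := val_of_lim (hg' x hxm) s1 (cd A B) (deriv_sol hp h1)
  have e4 := val_of_lim (hg' x hxm) s2 (cd A' B') (deriv_sol hx h2)
  rw [e1] at e2
  rw [e3] at e4
  have hx0 := hx.ne'
  field_simp at e2 e4
  have hA : (A - A') * (2 * x ^ 2) = 0 := by linear_combination e2 + e4
  have hA' : A = A' := by
    have := (mul_eq_zero.1 hA).resolve_right (by positivity)
    linarith
  subst hA'
  exact ⟨rfl, by linarith⟩

lemma rW_pos (j : ℕ) : 0 < rW j := by unfold rW; positivity
lemma hH_pos (β : ℝ) (j : ℕ) : 0 < hH β j := by unfold hH; positivity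
lemma rW_zero : rW 0 = 1 := by simp [rW]
lemma rW_anti : StrictAnti rW := by
  intro i j h
  unfold rW
  apply Real.rpow_lt_rpow_of_exponent_lt one_lt_two
  have : (i : ℝ) < j := by exact_mod_cast h
  linarith

lemma mem_Ddom {β : ℝ} {m : ℕ} {x : ℝ × ℝ} :
    x ∈ Ddom β m ↔ ∃ j, (1 ≤ j ∧ j ≤ m) ∧ x ∈ Srect β j := by
  simp [Ddom]

lemma strip_unique {i j : ℕ} {c : ℝ} (hc : c ∈ Ioo (rW j) (rW (j - 1)))
    (hi : rW i ≤ c) (hi' : c < rW (i - 1)) : i = j := by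
  rcases lt_trichotomy i j with h | h | h
  · have := rW_anti.antitone (show i ≤ j - 1 by omega)
    linarith [hc.2]
  · exact h
  · have := rW_anti.antitone (show j ≤ i - 1 by omega)
    linarith [hc.1]

lemma vertSeg_strip {β : ℝ} {m j : ℕ} (hj : 1 ≤ j) (hjm : j ≤ m) {c : ℝ}
    (hc : c ∈ Ioo (rW j) (rW (j - 1))) : vertSeg β m c = Ioo 0 (hH β j) := by
  ext z
  simp only [vertSeg, mem_setOf_eq, mem_Ddom]
  constructor
  · rintro ⟨i, -, h1, h2, h3, h4⟩
    have := strip_unique hc h1 h2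
    subst this
    exact ⟨h3, h4⟩
  · rintro ⟨h3, h4⟩
    exact ⟨j, ⟨hj, hjm⟩, hc.1.le, hc.2, h3, h4⟩

lemma not_corner {β : ℝ} {m j : ℕ} (hjm : j ≤ m) {c z : ℝ} (hm : 1 ≤ m) 
    (hc : c ∈ Ioo (rW j) (rW (j - 1))) : (c, z) ∉ cornerSet β m := by
  have key : ∀ i : ℕ, c ≠ rW i := by
    rintro i rfl
    have h1 := rW_anti.lt_iff_gt.1 hc.1
    have h2 := rW_anti.lt_iff_gt.1 hc.2
    omega
  have k0 := key 0
  rw [rW_zero] at k0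
  simp [cornerSet, key, k0]

/-- strip lemma in the domain -/
lemma strip_dom (β : ℝ) (m : ℕ) (hm : 1 ≤ m) (v ω : ℝ × ℝ → ℝ)
    (hv : ContDiffOn ℝ (⊤ : ℕ∞) v (Ddom β m))
    (hω : ContDiffOn ℝ (⊤ : ℕ∞) ω (Ddom β m))
    (hωc : ContinuousOn ω (closure (Ddom β m)))
    (hω0 : ∀ p ∈ bdD β m, ω p = 0)
    (hvext : ∀ j ∈ Finset.Icc 1 m,
      ContinuousOn v (closure (Srect β j) \ cornerSet β m) ∧
      ContinuousOn (pdr v) (closure (Srect β j) \ cornerSet β m) ∧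
      ContinuousOn (pdz v) (closure (Srect β j) \ cornerSet β m))
    (hvH : ∀ p ∈ bdH β m \ cornerSet β m, pdz v p = 0)
    (heq : ∀ p ∈ Ddom β m,
      pdr (pdr v) p + (1 / p.1) * pdr v p + pdz (pdz v) p - v p / p.1 ^ 2 = pdz ω p)
    (j : ℕ) (hj : 1 ≤ j) (hjm : j ≤ m) :
    ∃ A B : ℝ, ∀ c ∈ Ioo (rW j) (rW (j - 1)), (∫ z in vertSeg β m c, v (c, z)) = A * c + B / c := by
  have hlt : rW j < rW (j - 1) := rW_anti (by omega)
  have hh := hH_pos β j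
  have hSD : Srect β j ⊆ Ddom β m := fun x hx => mem_Ddom.2 ⟨j, ⟨hj, hjm⟩, hx⟩
  have hUS : Ioo (rW j) (rW (j - 1)) ×ˢ Ioo 0 (hH β j) ⊆ Srect β j :=
    fun x hx => ⟨hx.1.1.le, hx.1.2, hx.2.1, hx.2.2⟩
  have hUc : Ioo (rW j) (rW (j - 1)) ×ˢ Icc 0 (hH β j) ⊆ closure (Srect β j) := by
    refine Subset.trans ?_ (closure_mono hUS)
    rw [closure_prod_eq, closure_Ioo hlt.ne, closure_Ioo hh.ne]
    exact prod_mono Ioo_subset_Icc_self Subset.rfl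
  have hUc' : Ioo (rW j) (rW (j - 1)) ×ˢ Icc 0 (hH β j) ⊆ closure (Srect β j) \ cornerSet β m :=
    fun x hx => ⟨hUc hx, not_corner hjm hm hx.1⟩
  obtain ⟨c1, -, c3⟩ := hvext j (Finset.mem_Icc.2 ⟨hj, hjm⟩)
  have b0 : ∀ t ∈ Ioo (rW j) (rW (j - 1)), (t, (0:ℝ)) ∈ bdH β m := by
    intro t ht
    refine Or.inl ⟨rfl, (rW_anti.antitone hjm).trans ht.1.le, ?_⟩
    rw [← rW_zero]
    exact ht.2.le.trans (rW_anti.antitone (Nat.zero_le _))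
  have bh : ∀ t ∈ Ioo (rW j) (rW (j - 1)), (t, hH β j) ∈ bdH β m := by
    intro t ht
    refine Or.inr ?_
    simp only [mem_iUnion]
    exact ⟨j, Finset.mem_Icc.2 ⟨hj, hjm⟩, rfl, ht.1.le, ht.2.le⟩
  have hb : ∀ t z, t ∈ Ioo (rW j) (rW (j - 1)) → (t, z) ∈ bdH β m →
      ω (t, z) - pdz v (t, z) = 0 := by
    intro t z ht h
    rw [hω0 _ (Or.inl h), hvH _ ⟨h, not_corner hjm hm ht⟩, sub_zero]
  obtain ⟨A, B, H⟩ := strip (rW_pos j) hlt hh v ω (hv.mono (hUS.trans hSD))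
    (hω.mono (hUS.trans hSD)) (fun x hx => heq x (hSD (hUS hx))) (c1.mono hUc')
    ((hωc.mono (hUc.trans (closure_mono hSD))).sub (c3.mono hUc'))
    (fun t ht => hb t _ ht (b0 t ht)) (fun t ht => hb t _ ht (bh t ht))
  refine ⟨A, B, fun c hc => ?_⟩
  rw [← H c hc, vertSeg_strip hj hjm hc, intervalIntegral.integral_of_le hh.le,
    integral_Ioc_eq_integral_Ioo]

/-- The vertical line integrals of the solution `v` of
`Δ v - v/r² = ∂_{x₃} ω` with the stated boundary conditions all vanish. -/
theorem line_integral_vanishes (β : ℝ) (hβ : 1 < β) (hβ' : β ≤ 1.1)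
    (m : ℕ) (hm : 1 ≤ m) (v ω : ℝ × ℝ → ℝ)
    -- v and ω are smooth in the interior
    (hv : ContDiffOn ℝ (⊤ : ℕ∞) v (Ddom β m))
    (hω : ContDiffOn ℝ (⊤ : ℕ∞) ω (Ddom β m))
    -- (ii) ω is continuous up to the boundary and vanishes there
    (hωc : ContinuousOn ω (closure (Ddom β m)))
    (hω0 : ∀ p ∈ bdD β m, ω p = 0)
    -- (iii) v, ∂_r v, ∂_{x₃} v extend continuously to the closure of each rectangle
    -- away from the corner points, with the stated boundary values
    (hvext : ∀ j ∈ Finset.Icc 1 m,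
      ContinuousOn v (closure (Srect β j) \ cornerSet β m) ∧
      ContinuousOn (pdr v) (closure (Srect β j) \ cornerSet β m) ∧
      ContinuousOn (pdz v) (closure (Srect β j) \ cornerSet β m))
    (hvH : ∀ p ∈ bdH β m \ cornerSet β m, pdz v p = 0)
    (hvV : ∀ p ∈ bdV β m \ cornerSet β m, v p = 0)
    -- (i) the equation
    (heq : ∀ p ∈ Ddom β m,
      pdr (pdr v) p + (1 / p.1) * pdr v p + pdz (pdz v) p - v p / p.1 ^ 2 = pdz ω p)
    -- (iv) continuity of g and g'
    (hg : ContinuousOn (fun c => ∫ z in vertSeg β m c, v (c, z)) (Set.Icc (rW m) 1))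
    (hg' : ContinuousOn (deriv fun c => ∫ z in vertSeg β m c, v (c, z))
      (Set.Icc (rW m) 1)) :
    ∀ c ∈ Set.Ioo (rW m) 1, (∫ z in vertSeg β m c, v (c, z)) = 0 := by

  set g : ℝ → ℝ := fun c => ∫ z in vertSeg β m c, v (c, z) with hgdef
  have hS := strip_dom β m hm v ω hv hω hωc hω0 hvext hvH heq
  obtain ⟨A, B, h1⟩ := hS 1 le_rfl hm
  have hall : ∀ j, 1 ≤ j → j ≤ m → ∀ c ∈ Ioo (rW j) (rW (j - 1)), g c = A * c + B / c := by
    intro j hj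
    induction j, hj using Nat.le_induction with
    | base => exact fun _ => h1
    | succ j hj ih =>
      intro hjm
      obtain ⟨A', B', h2⟩ := hS (j + 1) (by omega) hjm
      obtain ⟨rfl, rfl⟩ := glue (rW_pos (j + 1)) (rW_anti (Nat.lt_succ_self j))
        (rW_anti (show j - 1 < j by omega)) (rW_anti.antitone hjm)
        (by rw [← rW_zero]; exact rW_anti.antitone (Nat.zero_le _)) hg hg' h2 (ih (by omega))
      exact h2
  have hrm : rW m < 1 := by rw [← rW_zero]; exact rW_anti (by omega)
  have le1 : ∀ j, rW j ≤ 1 := fun j => by rw [← rW_zero]; exact rW_anti.antitone (Nat.zero_le _)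
  -- boundary values
  have g1 : g 1 = 0 := by
    apply setIntegral_eq_zero_of_forall_eq_zero
    intro z hz
    obtain ⟨j, -, -, h2, -⟩ := mem_Ddom.1 hz
    exact absurd h2 (not_lt.2 (le1 _))
  have gm : g (rW m) = 0 := by
    apply setIntegral_eq_zero_of_forall_eq_zero
    intro z hz
    obtain ⟨j, ⟨hj1, hj2⟩, h1, h2, h3, h4⟩ := mem_Ddom.1 hz
    have hjm : j = m := le_antisymm hj2 (rW_anti.le_iff_ge.1 h1)
    subst hjm
    simp only at h3 h4
    apply hvV
    refine ⟨Or.inl (Or.inr ⟨rfl, h3.le, h4.le⟩), ?_⟩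
    have key : ∀ i, 1 ≤ i → i ≤ j - 1 → rW j ≠ rW i := fun i _ hi h => by
      have := rW_anti.injective h
      omega
    simp only [cornerSet, mem_union, mem_insert_iff, mem_singleton_iff, mem_iUnion, Prod.mk.injEq,
      Finset.mem_Icc, not_or, not_exists]
    refine ⟨⟨fun h => h3.ne' h.2, fun h => hrm.ne h.1, fun h => hrm.ne h.1, fun h => h4.ne h.2⟩, ?_⟩
    rintro i ⟨hi1, hi2⟩
    exact ⟨fun h => key i hi1 hi2 h.1, fun h => key i hi1 hi2 h.1⟩
  have e1 : g 1 = A * 1 + B / 1 := by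
    haveI := neBot_right (show rW 1 < 1 by rw [← rW_zero]; exact rW_anti one_pos)
    refine val_of_lim (s := Ioo (rW 1) 1) (hg 1 ⟨hrm.le, le_rfl⟩) ?_ (contAt_sol A B one_pos) ?_
    · exact fun y hy => ⟨(rW_anti.antitone hm).trans hy.1.le, hy.2.le⟩
    · have := hall 1 le_rfl hm
      rwa [Nat.sub_self, rW_zero] at this
  have eL : ∀ j, 1 ≤ j → j ≤ m → g (rW j) = A * rW j + B / rW j := by
    intro j hj hjm
    haveI := neBot_left (show rW j < rW (j - 1) from rW_anti (by omega))
    refine val_of_lim (s := Ioo (rW j) (rW (j - 1))) (hg _ ⟨rW_anti.antitone hjm, le1 j⟩) ?_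
      (contAt_sol A B (rW_pos j)) (hall j hj hjm)
    exact fun y hy => ⟨(rW_anti.antitone hjm).trans hy.1.le, hy.2.le.trans (le1 _)⟩
  have em := eL m hm le_rfl
  have hB : B = -A := by linarith
  have hA : A = 0 := by
    have hp := rW_pos m
    rw [gm, hB] at em
    field_simp at em
    have h0 : A * (1 - rW m ^ 2) = 0 := by linarith
    exact (mul_eq_zero.1 h0).resolve_right (by nlinarith)
  have hB0 : B = 0 := by rw [hB, hA, neg_zero]
  have main : ∀ j, 1 ≤ j → j ≤ m → ∀ c, rW j ≤ c → c < rW (j - 1) → g c = 0 := by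
    intro j hj hjm c h1 h2
    rcases h1.eq_or_lt with h | h
    · rw [← h, eL j hj hjm, hA, hB0]; simp
    · rw [hall j hj hjm c ⟨h, h2⟩, hA, hB0]; simp
  intro c hc
  have hex : ∃ j, rW j ≤ c := ⟨m, hc.1.le⟩
  classical
  have f1 := Nat.find_spec hex
  have f2 : Nat.find hex ≤ m := Nat.find_le hc.1.le
  have f3 : 1 ≤ Nat.find hex := by
    by_contra h
    have : Nat.find hex = 0 := by omega
    rw [this, rW_zero] at f1
    linarith [hc.2]
  exact main _ f3 f2 c f1 (not_le.1 (Nat.find_min hex (by omega)))
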